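/- arXiv:1702.04834 — 2 statements merged into one kernel-verified Lean document; each statement's English description precedes it below -/
import Mathlib

section
/- Finite-blocklength average-case converse (Theorem 3): Consider any zero-error coded caching scheme with demand-dependent delivery alphabets, i.e., positive integers N, K, F, a real M ≥ 0, messages W_1,…,W_N i.i.d. uniform on {1,…,2^F}, cache values V_k = g_k(W_1,…,W_N) for k ∈ {1,…,K} where each g_k maps into a set of size at most ⌊2^{F·M}⌋, for every demand vector d ∈ {1,…,N}^K a finite alphabet 𝒳_d, a delivery symbol X_d = f_d(W_1,…,W_N) ∈ 𝒳_d, and decoders φ_{k,d} with φ_{k,d}(X_d, V_k) = W_{d_k} for every realization of (W_1,…,W_N), every k, and every d. Then for every ℓ ∈ {1,…,K}: (1/N^K)·∑_{d ∈ {1,…,N}^K} log₂|𝒳_d| ≥ F·(1 − (1 − 1/N)^ℓ)·(N − ℓ·M) and (1/N^K)·∑_{d ∈ {1,…,N}^K} log₂|𝒳_d| ≥ F·[(1 − (1 − 1/N)^ℓ)·N − (ℓ(ℓ+1)/(2N))·M]. (Letting F → ∞ this yields the paper's asymptotic bound R*_avg(M) ≥ R^low_avg(M).) -/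
/-!
Identify a random variable on the finite space of message tuples with the partition it induces, and
let `H` be the entropy for the uniform distribution. Fix a set `T` of `ℓ` receivers. For random
demands, the set `S` of messages requested by `T` arises from `ℓ` uniform draws with replacement,
and by subadditivity of conditional entropy each draw shrinks the expected deficit
`H(all messages, caches) - H(messages in S, caches)` by a factor `1 - 1 / N`.

For the first bound, decode all of `T` at once: the delivery and the `ℓ` caches determine the
messages in `S`, so `H(X)` is at least the gain `H(messages in S, caches) - H(caches)`.
For the second bound, decode receiver by receiver: when receiver `k` joins `T`, the entropy of
the delivery given what is already known drops by at least that of the message `k` requests, given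
the messages in `S` and `ℓ + 1` caches. This averages to `F (1 - 1 / N) ^ ℓ - (ℓ + 1) F M / N`,
and summing over `ℓ` gives the claim.
-/

section

open Finset Real
open scoped BigOperators

section Entropy

variable {Ω : Type*} [Fintype Ω] {r s t : Setoid Ω}

open Classical in
/-- The equivalence class of `a` under `r`, as a finset. -/
noncomputable def cell (r : Setoid Ω) (a : Ω) : Finset Ω := {b | r a b}

/-- Shannon entropy in bits of the partition `r` of `Ω` under the uniform distribution. A random
variable `X` on `Ω` is encoded as the partition `Setoid.ker X`, so that `⊓` is the joint variable
and `r ≤ s` says that `r` determines `s`. -/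
noncomputable def uniformEntropy (r : Setoid Ω) : ℝ := 𝔼 a, logb 2 (Fintype.card Ω / #(cell r a))

/-- Conditional entropy `H(r | s) = H(r, s) - H(s)` for the uniform distribution on `Ω`. -/
noncomputable def uniformCondEntropy (r s : Setoid Ω) : ℝ :=
  uniformEntropy (r ⊓ s) - uniformEntropy s

@[simp]
lemma mem_cell {a b : Ω} : b ∈ cell r a ↔ r a b := by simp [cell]

lemma card_cell_pos (r : Setoid Ω) (a : Ω) : 0 < (#(cell r a) : ℝ) :=
  Nat.cast_pos.2 (card_pos.2 ⟨a, mem_cell.2 (r.refl a)⟩)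

lemma cell_eq_of_rel {a b : Ω} (h : r a b) : cell r a = cell r b := by
  ext c
  simp only [mem_cell]
  exact ⟨r.trans (r.symm h), r.trans h⟩

lemma cell_mono (h : r ≤ s) (a : Ω) : cell r a ⊆ cell s a :=
  fun _ hb ↦ mem_cell.2 (h (mem_cell.1 hb))

lemma sum_inv_card_cell_le_one (A : Finset Ω) (hA : ∀ a ∈ A, ∀ b ∈ A, r a b) :
    ∑ a ∈ A, (#(cell r a) : ℝ)⁻¹ ≤ 1 := by
  obtain rfl | ⟨a, ha⟩ := A.eq_empty_or_nonempty
  · simp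
  calc ∑ b ∈ A, (#(cell r b) : ℝ)⁻¹ = ∑ _b ∈ A, (#(cell r a) : ℝ)⁻¹ :=
        sum_congr rfl fun b hb ↦ by rw [cell_eq_of_rel (hA a ha b hb)]
    _ = #A / #(cell r a) := by rw [sum_const, nsmul_eq_mul, div_eq_mul_inv]
    _ ≤ 1 := div_le_one_of_le₀
        (mod_cast card_le_card fun b hb ↦ mem_cell.2 (hA a ha b hb)) (Nat.cast_nonneg _)

lemma sum_inv_card_cell_ker_le {α : Type*} [Fintype α] (X : Ω → α) :
    ∑ a, (#(cell (Setoid.ker X) a) : ℝ)⁻¹ ≤ Fintype.card α := by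
  classical
  rw [← sum_fiberwise univ X]
  calc ∑ x, ∑ a with X a = x, (#(cell (Setoid.ker X) a) : ℝ)⁻¹ ≤ ∑ _x : α, (1 : ℝ) :=
        sum_le_sum fun x _ ↦ sum_inv_card_cell_le_one _ fun a ha b hb ↦
          (mem_filter.1 ha).2.trans (mem_filter.1 hb).2.symm
    _ = Fintype.card α := by simp

lemma sum_card_cell_div_card_cell_inf_le (hr : r ≤ t) (hs : s ≤ t) (b : Ω) :
    ∑ a ∈ cell r b, (#(cell s a) : ℝ) / #(cell (r ⊓ s) a) ≤ #(cell t b) := by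
  classical
  calc ∑ a ∈ cell r b, (#(cell s a) : ℝ) / #(cell (r ⊓ s) a)
      = ∑ a ∈ cell r b, ∑ _c ∈ cell s a, (#(cell (r ⊓ s) a) : ℝ)⁻¹ := by
        simp only [sum_const, nsmul_eq_mul, div_eq_mul_inv]
    _ = ∑ c ∈ cell t b, ∑ a ∈ cell r b ∩ cell s c, (#(cell (r ⊓ s) a) : ℝ)⁻¹ := by
        refine sum_comm' fun a c ↦ ?_
        simp only [mem_inter, mem_cell]
        exact ⟨fun h ↦ ⟨⟨h.1, s.symm h.2⟩, t.trans (hr h.1) (hs h.2)⟩,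
          fun h ↦ ⟨h.1.1, s.symm h.1.2⟩⟩
    _ ≤ ∑ _c ∈ cell t b, (1 : ℝ) := by
        refine sum_le_sum fun c _ ↦ sum_inv_card_cell_le_one _ fun a ha a' ha' ↦ ?_
        simp only [mem_inter, mem_cell] at ha ha'
        exact ⟨r.trans (r.symm ha.1) ha'.1, s.trans (s.symm ha.2) ha'.2⟩
    _ = #(cell t b) := by simp

lemma sum_card_cell_mul_div_le (hr : r ≤ t) (hs : s ≤ t) :
    ∑ a, (#(cell r a) * #(cell s a) : ℝ) / (#(cell (r ⊓ s) a) * #(cell t a))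
      ≤ Fintype.card Ω := by
  calc ∑ a, (#(cell r a) * #(cell s a) : ℝ) / (#(cell (r ⊓ s) a) * #(cell t a))
      = ∑ a, ∑ _b ∈ cell r a, (#(cell s a) : ℝ) / #(cell (r ⊓ s) a) / #(cell t a) := by
        simp only [sum_const, nsmul_eq_mul, div_div, mul_div_assoc]
    _ = ∑ b, ∑ a ∈ cell r b, (#(cell s a) : ℝ) / #(cell (r ⊓ s) a) / #(cell t a) :=
        sum_comm' fun a b ↦ by simp only [mem_univ, mem_cell, true_and, and_true, r.comm']
    _ = ∑ b, (∑ a ∈ cell r b, (#(cell s a) : ℝ) / #(cell (r ⊓ s) a)) / #(cell t b) := by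
        refine sum_congr rfl fun b _ ↦ ?_
        rw [sum_div]
        exact sum_congr rfl fun a ha ↦ by rw [cell_eq_of_rel (hr (mem_cell.1 ha))]
    _ ≤ ∑ _b : Ω, (1 : ℝ) := sum_le_sum fun b _ ↦
        div_le_one_of_le₀ (sum_card_cell_div_card_cell_inf_le hr hs b) (Nat.cast_nonneg _)
    _ = Fintype.card Ω := by simp

lemma expect_logb_nonpos_of_sum_le_card {w : Ω → ℝ} (hw : ∀ a, 0 < w a)
    (hsum : ∑ a, w a ≤ Fintype.card Ω) :
    𝔼 a, logb 2 (w a) ≤ 0 := by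
  have hlog : ∑ a, log (w a) ≤ 0 :=
    calc ∑ a, log (w a) ≤ ∑ a, (w a - 1) := sum_le_sum fun a _ ↦ log_le_sub_one_of_pos (hw a)
      _ = ∑ a, w a - Fintype.card Ω := by simp
      _ ≤ 0 := sub_nonpos.2 hsum
  simp only [logb, ← expect_div, Fintype.expect_eq_sum_div_card]
  exact div_nonpos_of_nonpos_of_nonneg
    (div_nonpos_of_nonpos_of_nonneg hlog (Nat.cast_nonneg _)) (log_nonneg one_le_two)

lemma uniformEntropy_anti (h : r ≤ s) : uniformEntropy s ≤ uniformEntropy r := by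
  refine expect_le_expect fun a _ ↦ ?_
  have : Nonempty Ω := ⟨a⟩
  have hr := card_cell_pos r a
  have hs := card_cell_pos s a
  have hrs : (#(cell r a) : ℝ) ≤ #(cell s a) := mod_cast card_le_card (cell_mono h a)
  exact logb_le_logb_of_le one_lt_two (by positivity) (by gcongr)

lemma uniformEntropy_top : uniformEntropy (⊤ : Setoid Ω) = 0 := by
  refine expect_eq_zero fun a _ ↦ ?_
  have : Nonempty Ω := ⟨a⟩
  have hcell : cell ⊤ a = (univ : Finset Ω) := eq_univ_of_forall fun b ↦ mem_cell.2 trivial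
  rw [hcell, card_univ, div_self (mod_cast Fintype.card_ne_zero), logb_one]

lemma uniformEntropy_bot : uniformEntropy (⊥ : Setoid Ω) = logb 2 (Fintype.card Ω) := by
  have hcell (a : Ω) : cell ⊥ a = {a} := by
    ext b
    simp [eq_comm]
  obtain _ | _ := isEmpty_or_nonempty Ω
  · simp [uniformEntropy]
  · simp [uniformEntropy, hcell]

lemma uniformEntropy_nonneg (r : Setoid Ω) : 0 ≤ uniformEntropy r :=
  uniformEntropy_top.ge.trans (uniformEntropy_anti le_top)

lemma uniformEntropy_submodular (hr : r ≤ t) (hs : s ≤ t) :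
    uniformEntropy (r ⊓ s) + uniformEntropy t ≤ uniformEntropy r + uniformEntropy s := by
  have hgibbs := expect_logb_nonpos_of_sum_le_card
    (fun a ↦ div_pos (mul_pos (card_cell_pos r a) (card_cell_pos s a))
      (mul_pos (card_cell_pos (r ⊓ s) a) (card_cell_pos t a)))
    (sum_card_cell_mul_div_le hr hs)
  have hsplit : uniformEntropy (r ⊓ s) + uniformEntropy t
      = uniformEntropy r + uniformEntropy s + 𝔼 a, logb 2
        ((#(cell r a) * #(cell s a) : ℝ) / (#(cell (r ⊓ s) a) * #(cell t a))) := by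
    simp only [uniformEntropy, ← expect_add_distrib]
    refine expect_congr rfl fun a _ ↦ ?_
    have : Nonempty Ω := ⟨a⟩
    have hr := card_cell_pos r a
    have hs := card_cell_pos s a
    have hrs := card_cell_pos (r ⊓ s) a
    have ht := card_cell_pos t a
    rw [← logb_mul (by positivity) (by positivity), ← logb_mul (by positivity) (by positivity),
      ← logb_mul (by positivity) (by positivity)]
    congr 1
    field_simp
  linarith

lemma uniformEntropy_ker_le [Nonempty Ω] {α : Type*} [Fintype α] (X : Ω → α) :
    uniformEntropy (Setoid.ker X) ≤ logb 2 (Fintype.card α) := by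
  have hΩ : (0 : ℝ) < Fintype.card Ω := mod_cast Fintype.card_pos
  have : Nonempty α := .map X ‹_›
  have hα : (0 : ℝ) < Fintype.card α := mod_cast Fintype.card_pos
  have hgibbs : 𝔼 a, logb 2
      (Fintype.card Ω / Fintype.card α * (#(cell (Setoid.ker X) a) : ℝ)⁻¹) ≤ 0 := by
    refine expect_logb_nonpos_of_sum_le_card
      (fun a ↦ mul_pos (div_pos hΩ hα) (inv_pos.2 (card_cell_pos _ a))) ?_
    rw [← mul_sum]
    calc _ ≤ (Fintype.card Ω / Fintype.card α : ℝ) * Fintype.card α := by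
          gcongr
          exact sum_inv_card_cell_ker_le X
      _ = Fintype.card Ω := div_mul_cancel₀ _ hα.ne'
  have hsplit : uniformEntropy (Setoid.ker X) = 𝔼 a, logb 2
      (Fintype.card Ω / Fintype.card α * (#(cell (Setoid.ker X) a) : ℝ)⁻¹)
        + logb 2 (Fintype.card α) := by
    rw [uniformEntropy, ← Fintype.expect_const (ι := Ω) (logb 2 (Fintype.card α)),
      ← expect_add_distrib]
    refine expect_congr rfl fun a _ ↦ ?_
    have hcell := card_cell_pos (Setoid.ker X) a
    rw [← logb_mul (by positivity) hα.ne']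
    congr 1
    field_simp
  linarith

lemma uniformCondEntropy_top (r : Setoid Ω) : uniformCondEntropy r ⊤ = uniformEntropy r := by
  rw [uniformCondEntropy, inf_top_eq, uniformEntropy_top, sub_zero]

lemma uniformCondEntropy_nonneg (r s : Setoid Ω) : 0 ≤ uniformCondEntropy r s :=
  sub_nonneg.2 (uniformEntropy_anti inf_le_right)

lemma uniformCondEntropy_anti (r : Setoid Ω) (h : s ≤ t) :
    uniformCondEntropy r s ≤ uniformCondEntropy r t := by
  have hsub : uniformEntropy (r ⊓ t ⊓ s) + uniformEntropy t
      ≤ uniformEntropy (r ⊓ t) + uniformEntropy s := uniformEntropy_submodular inf_le_right h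
  rw [inf_assoc, inf_eq_right.2 h] at hsub
  unfold uniformCondEntropy
  linarith

lemma uniformCondEntropy_le_uniformEntropy (r s : Setoid Ω) :
    uniformCondEntropy r s ≤ uniformEntropy r :=
  (uniformCondEntropy_anti r le_top).trans_eq (uniformCondEntropy_top r)

lemma uniformEntropy_inf (r s : Setoid Ω) :
    uniformEntropy (r ⊓ s) = uniformCondEntropy r s + uniformEntropy s :=
  (sub_add_cancel _ _).symm

lemma uniformEntropy_inf_le (r s : Setoid Ω) :
    uniformEntropy (r ⊓ s) ≤ uniformEntropy r + uniformEntropy s := by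
  linarith [uniformEntropy_inf r s, uniformCondEntropy_le_uniformEntropy r s]

lemma uniformEntropy_le_add_of_inf_le (h : r ⊓ s ≤ t) :
    uniformEntropy t ≤ uniformEntropy r + uniformEntropy s :=
  (uniformEntropy_anti h).trans (uniformEntropy_inf_le r s)

lemma uniformCondEntropy_inf (r s t : Setoid Ω) :
    uniformCondEntropy (r ⊓ s) t = uniformCondEntropy r (s ⊓ t) + uniformCondEntropy s t := by
  simp only [uniformCondEntropy, inf_assoc]
  ring

lemma uniformCondEntropy_eq_add_of_inf_le (h : r ⊓ t ≤ s) :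
    uniformCondEntropy r t = uniformCondEntropy r (s ⊓ t) + uniformCondEntropy s t := by
  rw [← uniformCondEntropy_inf, uniformCondEntropy, uniformCondEntropy, inf_right_comm,
    inf_eq_left.2 h]

lemma uniformCondEntropy_finset_inf_le {ι : Type*} (m : ι → Setoid Ω) (s : Setoid Ω)
    (S : Finset ι) : uniformCondEntropy (S.inf m) s ≤ ∑ i ∈ S, uniformCondEntropy (m i) s := by
  classical
  induction S using Finset.induction_on with
  | empty => simp [uniformCondEntropy]
  | insert i S hi ih =>
    rw [inf_insert, uniformCondEntropy_inf, sum_insert hi]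
    exact add_le_add (uniformCondEntropy_anti _ inf_le_right) ih

lemma uniformEntropy_finset_inf_le_card_mul {ι : Type*} {m : ι → Setoid Ω} {L : ℝ}
    (hm : ∀ i, uniformEntropy (m i) ≤ L) (S : Finset ι) : uniformEntropy (S.inf m) ≤ #S * L :=
  calc uniformEntropy (S.inf m) = uniformCondEntropy (S.inf m) ⊤ := (uniformCondEntropy_top _).symm
    _ ≤ ∑ i ∈ S, uniformCondEntropy (m i) ⊤ := uniformCondEntropy_finset_inf_le m ⊤ S
    _ ≤ ∑ _i ∈ S, L := sum_le_sum fun i _ ↦ (uniformCondEntropy_top _).trans_le (hm i)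
    _ = #S * L := by rw [sum_const, nsmul_eq_mul]

end Entropy

section RandomDemands

lemma image_update_of_notMem {ι κ : Type*} [DecidableEq ι] [DecidableEq κ] {T : Finset κ} {k : κ}
    (hk : k ∉ T) (d : κ → ι) (n : ι) : T.image (Function.update d k n) = T.image d :=
  image_congr fun _ hj ↦ Function.update_of_ne (ne_of_mem_of_not_mem hj hk) _ _

variable {ι κ : Type*} [Fintype ι] [Fintype κ] [DecidableEq κ]

lemma expect_apply_eq_expect_expect {F : (κ → ι) → ι → ℝ} (k : κ)
    (hF : ∀ d n, F (Function.update d k n) = F d) : 𝔼 d, F d (d k) = 𝔼 d, 𝔼 n, F d n := by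
  obtain _ | _ := isEmpty_or_nonempty ι
  · have : IsEmpty (κ → ι) := ⟨fun d ↦ isEmptyElim (d k)⟩
    simp
  let swap : (κ → ι) × ι → (κ → ι) × ι := fun p ↦ (Function.update p.1 k p.2, p.1 k)
  have hswap : Function.Involutive swap := fun p ↦ by simp [swap]
  calc 𝔼 d, F d (d k) = 𝔼 d, 𝔼 _n : ι, F d (d k) := by simp only [Fintype.expect_const]
    _ = 𝔼 p : (κ → ι) × ι, F p.1 (p.1 k) := by rw [← univ_product_univ, expect_product]
    _ = 𝔼 p : (κ → ι) × ι, F p.1 p.2 :=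
      Fintype.expect_equiv hswap.toPerm _ _ fun p ↦ by simp [swap, hF]
    _ = 𝔼 d, 𝔼 n, F d n := by rw [← univ_product_univ, expect_product]

variable [DecidableEq ι]

lemma expect_image_apply {T : Finset κ} {k : κ} (hk : k ∉ T) (F : Finset ι → ι → ℝ) :
    𝔼 d : κ → ι, F (T.image d) (d k) = 𝔼 d : κ → ι, 𝔼 n, F (T.image d) n :=
  expect_apply_eq_expect_expect (F := fun d ↦ F (T.image d)) k fun d n ↦ by
    simp only [image_update_of_notMem hk]

-- The hypothesis says that adjoining a uniformly random index shrinks the deficit `f univ - f S`,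
-- on average, by the factor `1 - 1 / |ι|`.
lemma sub_expect_image_le [Nonempty ι] {f : Finset ι → ℝ}
    (hf : ∀ S, f univ - f S ≤ ∑ n, (f (insert n S) - f S)) (T : Finset κ) :
    f univ - 𝔼 d : κ → ι, f (T.image d)
      ≤ (1 - 1 / (Fintype.card ι : ℝ)) ^ #T * (f univ - f ∅) := by
  have hcontract (S : Finset ι) :
      f univ - 𝔼 n, f (insert n S) ≤ (1 - 1 / (Fintype.card ι : ℝ)) * (f univ - f S) := by
    have hS := hf S
    simp only [sum_sub_distrib, sum_const, card_univ, nsmul_eq_mul] at hS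
    rw [Fintype.expect_eq_sum_div_card]
    field_simp
    linarith
  induction T using Finset.induction_on with
  | empty => simp
  | insert k T hk ih =>
    calc f univ - 𝔼 d : κ → ι, f ((insert k T).image d)
        = 𝔼 d : κ → ι, (f univ - 𝔼 n, f (insert n (T.image d))) := by
          simp only [image_insert, expect_image_apply hk fun S n ↦ f (insert n S),
            expect_sub_distrib, Fintype.expect_const]
      _ ≤ 𝔼 d : κ → ι, (1 - 1 / (Fintype.card ι : ℝ)) * (f univ - f (T.image d)) :=
          expect_le_expect fun d _ ↦ hcontract _
      _ = (1 - 1 / (Fintype.card ι : ℝ)) * (f univ - 𝔼 d : κ → ι, f (T.image d)) := by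
          rw [← mul_expect, expect_sub_distrib, Fintype.expect_const]
      _ ≤ (1 - 1 / (Fintype.card ι : ℝ)) *
            ((1 - 1 / (Fintype.card ι : ℝ)) ^ #T * (f univ - f ∅)) :=
          mul_le_mul_of_nonneg_left ih (Nat.one_sub_one_div_cast_nonneg _)
      _ = _ := by rw [card_insert_of_notMem hk, pow_succ', mul_assoc]

lemma expect_card_image_le [Nonempty ι] (T : Finset κ) :
    𝔼 d : κ → ι, (#(T.image d) : ℝ)
      ≤ Fintype.card ι * (1 - (1 - 1 / (Fintype.card ι : ℝ)) ^ #T) := by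
  have hmodular (S : Finset ι) :
      (-#(univ : Finset ι) : ℝ) - -#S ≤ ∑ n, (-#(insert n S) - -#S : ℝ) := by
    have hinsert (n : ι) : (-#(insert n S) - -#S : ℝ) = -if n ∈ Sᶜ then 1 else 0 := by
      by_cases hn : n ∈ S <;> simp [hn]
    simp only [hinsert, sum_neg_distrib, sum_boole, filter_univ_mem]
    rw [card_univ, card_compl, Nat.cast_sub (card_le_univ S)]
    linarith
  have hdeficit := sub_expect_image_le (f := fun S ↦ -#S) hmodular T
  simp only [expect_neg_distrib, card_univ, card_empty, Nat.cast_zero] at hdeficit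
  linarith

end RandomDemands

section Converse

-- `m`, `c` and `x` are the partitions induced by the messages, the caches and the deliveries, so
-- that `x d ⊓ c k ≤ m (d k)` says that receiver `k` can decode its request under the demands `d`.
variable {Ω ι κ : Type*} {m : ι → Setoid Ω} {c : κ → Setoid Ω} {L C : ℝ}

lemma inf_finset_inf_le_image_inf [DecidableEq ι] {x : Setoid Ω} {d : κ → ι}
    (hdec : ∀ k, x ⊓ c k ≤ m (d k)) (T : Finset κ) :
    x ⊓ T.inf c ≤ (T.image d).inf m := by
  rw [inf_image]
  exact Finset.le_inf fun k hk ↦ (inf_le_inf_left x (Finset.inf_le hk)).trans (hdec k)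

variable [Fintype Ω]

lemma uniformCondEntropy_insert_add_le [DecidableEq ι] [DecidableEq κ] {x : Setoid Ω}
    {d : κ → ι} {k : κ} (hdec : x ⊓ c k ≤ m (d k)) (T : Finset κ) :
    uniformCondEntropy x (((insert k T).image d).inf m ⊓ (insert k T).inf c)
        + uniformCondEntropy (m (d k)) ((T.image d).inf m ⊓ (insert k T).inf c)
      ≤ uniformCondEntropy x ((T.image d).inf m ⊓ T.inf c) := by
  have hdet : x ⊓ ((T.image d).inf m ⊓ (insert k T).inf c) ≤ m (d k) :=
    (inf_le_inf_left x (inf_le_right.trans (Finset.inf_le (mem_insert_self k T)))).trans hdec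
  rw [image_insert, inf_insert, inf_assoc, ← uniformCondEntropy_eq_add_of_inf_le hdet]
  exact uniformCondEntropy_anti x (inf_le_inf_left _ (inf_mono (subset_insert k T)))

variable [Fintype ι]

lemma uniformEntropy_sub_le_sum_insert [DecidableEq ι] (m : ι → Setoid Ω) (r : Setoid Ω)
    (S : Finset ι) :
    uniformEntropy (univ.inf m ⊓ r) - uniformEntropy (S.inf m ⊓ r)
      ≤ ∑ n, (uniformEntropy ((insert n S).inf m ⊓ r) - uniformEntropy (S.inf m ⊓ r)) := by
  have hunion : univ.inf m ⊓ (S.inf m ⊓ r) = univ.inf m ⊓ r := by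
    rw [← inf_assoc, inf_eq_left.2 (inf_mono (subset_univ S))]
  simpa only [uniformCondEntropy, hunion, inf_insert, inf_assoc] using
    uniformCondEntropy_finset_inf_le m (S.inf m ⊓ r) univ

lemma sub_mul_sub_le_sum_uniformCondEntropy (hm : ∀ n, uniformEntropy (m n) ≤ L)
    (hjoint : Fintype.card ι * L ≤ uniformEntropy (univ.inf m))
    (hc : ∀ k, uniformEntropy (c k) ≤ C) (S : Finset ι) (T : Finset κ) :
    (Fintype.card ι - #S : ℝ) * L - #T * C
      ≤ ∑ n, uniformCondEntropy (m n) (S.inf m ⊓ T.inf c) := by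
  have hrefine : uniformEntropy (univ.inf m) ≤ uniformEntropy (univ.inf m ⊓ (S.inf m ⊓ T.inf c)) :=
    uniformEntropy_anti inf_le_left
  have hchain := uniformCondEntropy_finset_inf_le m (S.inf m ⊓ T.inf c) univ
  have hside := uniformEntropy_inf_le (S.inf m) (T.inf c)
  have hS := uniformEntropy_finset_inf_le_card_mul hm S
  have hT := uniformEntropy_finset_inf_le_card_mul hc T
  rw [uniformCondEntropy] at hchain
  linarith

variable [Nonempty ι] [Fintype κ] [DecidableEq κ] {x : (κ → ι) → Setoid Ω}

lemma joint_decoding_bound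
    (hjoint : Fintype.card ι * L ≤ uniformEntropy (univ.inf m)) (hc : ∀ k, uniformEntropy (c k) ≤ C)
    (hdec : ∀ d k, x d ⊓ c k ≤ m (d k)) (T : Finset κ) :
    (1 - (1 - 1 / (Fintype.card ι : ℝ)) ^ #T) * (Fintype.card ι * L - #T * C)
      ≤ 𝔼 d, uniformEntropy (x d) := by
  classical
  set p : ℝ := 1 - 1 / Fintype.card ι
  have hp : p ^ #T ≤ 1 := pow_le_one₀ (Nat.one_sub_one_div_cast_nonneg _)
    (Nat.one_sub_one_div_cast_le_one _)
  let f : Finset ι → ℝ := fun S ↦ uniformEntropy (S.inf m ⊓ T.inf c)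
  have hdeficit : f univ - 𝔼 d : κ → ι, f (T.image d) ≤ p ^ #T * (f univ - f ∅) :=
    sub_expect_image_le (uniformEntropy_sub_le_sum_insert m (T.inf c)) T
  have huniv : Fintype.card ι * L ≤ f univ :=
    hjoint.trans (uniformEntropy_anti inf_le_left)
  have hempty : f ∅ = uniformEntropy (T.inf c) := by simp [f]
  have hcaches : f ∅ ≤ #T * C := hempty.trans_le (uniformEntropy_finset_inf_le_card_mul hc T)
  have hdecode (d : κ → ι) : f (T.image d) ≤ uniformEntropy (x d) + f ∅ := by
    rw [hempty]
    exact uniformEntropy_le_add_of_inf_le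
      (le_inf (inf_finset_inf_le_image_inf (hdec d) T) inf_le_right)
  calc (1 - p ^ #T) * (Fintype.card ι * L - #T * C)
      ≤ (1 - p ^ #T) * (f univ - f ∅) :=
        mul_le_mul_of_nonneg_left (sub_le_sub huniv hcaches) (sub_nonneg.2 hp)
    _ ≤ 𝔼 d : κ → ι, f (T.image d) - f ∅ := by linarith
    _ = 𝔼 d : κ → ι, (f (T.image d) - f ∅) := by rw [expect_sub_distrib, Fintype.expect_const]
    _ ≤ 𝔼 d, uniformEntropy (x d) :=
        expect_le_expect fun d _ ↦ sub_le_iff_le_add.2 (hdecode d)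

lemma pow_mul_sub_le_expect_uniformCondEntropy [DecidableEq ι]
    (hm : ∀ n, uniformEntropy (m n) ≤ L) (hjoint : Fintype.card ι * L ≤ uniformEntropy (univ.inf m))
    (hc : ∀ k, uniformEntropy (c k) ≤ C) {T : Finset κ} {k : κ} (hk : k ∉ T) (U : Finset κ) :
    (1 - 1 / (Fintype.card ι : ℝ)) ^ #T * L - #U / Fintype.card ι * C
      ≤ 𝔼 d : κ → ι, uniformCondEntropy (m (d k)) ((T.image d).inf m ⊓ U.inf c) := by
  have hL : 0 ≤ L := (uniformEntropy_nonneg _).trans (hm (Classical.arbitrary ι))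
  set q : ℝ := (1 - 1 / (Fintype.card ι : ℝ)) ^ #T
  have hfresh : q * Fintype.card ι ≤ 𝔼 d : κ → ι, (Fintype.card ι - #(T.image d) : ℝ) := by
    rw [expect_sub_distrib, Fintype.expect_const]
    linarith [expect_card_image_le (ι := ι) T]
  calc q * L - #U / Fintype.card ι * C
      = (q * Fintype.card ι * L - #U * C) / Fintype.card ι := by field_simp
    _ ≤ ((𝔼 d : κ → ι, (Fintype.card ι - #(T.image d) : ℝ)) * L - #U * C) / Fintype.card ι := by
        gcongr
    _ = 𝔼 d : κ → ι, ((Fintype.card ι - #(T.image d) : ℝ) * L - #U * C) / Fintype.card ι := by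
        rw [← expect_div, expect_sub_distrib _ _ fun _ ↦ (#U : ℝ) * C, Fintype.expect_const,
          ← expect_mul]
    _ ≤ 𝔼 d : κ → ι, 𝔼 n, uniformCondEntropy (m n) ((T.image d).inf m ⊓ U.inf c) := by
        refine expect_le_expect fun d _ ↦ ?_
        rw [Fintype.expect_eq_sum_div_card]
        gcongr
        exact sub_mul_sub_le_sum_uniformCondEntropy hm hjoint hc _ U
    _ = 𝔼 d : κ → ι, uniformCondEntropy (m (d k)) ((T.image d).inf m ⊓ U.inf c) :=
        (expect_image_apply hk fun S n ↦ uniformCondEntropy (m n) (S.inf m ⊓ U.inf c)).symm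

lemma expect_uniformCondEntropy_image_add_le [DecidableEq ι]
    (hm : ∀ n, uniformEntropy (m n) ≤ L) (hjoint : Fintype.card ι * L ≤ uniformEntropy (univ.inf m))
    (hc : ∀ k, uniformEntropy (c k) ≤ C) (hdec : ∀ d k, x d ⊓ c k ≤ m (d k)) (T : Finset κ) :
    𝔼 d : κ → ι, uniformCondEntropy (x d) ((T.image d).inf m ⊓ T.inf c)
        + ((1 - (1 - 1 / (Fintype.card ι : ℝ)) ^ #T) * (Fintype.card ι * L)
          - #T * (#T + 1) / (2 * Fintype.card ι) * C)
      ≤ 𝔼 d, uniformEntropy (x d) := by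
  induction T using Finset.induction_on with
  | empty => simp [uniformCondEntropy_top]
  | insert k T hk ih =>
    have hstep := expect_le_expect fun (d : κ → ι) (_ : d ∈ univ) ↦
      uniformCondEntropy_insert_add_le (hdec d k) T
    have hfresh := pow_mul_sub_le_expect_uniformCondEntropy hm hjoint hc hk (insert k T)
    rw [expect_add_distrib] at hstep
    rw [card_insert_of_notMem hk] at hfresh ⊢
    have hgeom : (1 - (1 - 1 / (Fintype.card ι : ℝ)) ^ (#T + 1)) * (Fintype.card ι * L)
        = (1 - (1 - 1 / (Fintype.card ι : ℝ)) ^ #T) * (Fintype.card ι * L)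
          + (1 - 1 / (Fintype.card ι : ℝ)) ^ #T * L := by
      rw [pow_succ]
      field_simp
      ring
    have harith : (↑(#T + 1) * (↑(#T + 1) + 1) / (2 * Fintype.card ι) * C : ℝ)
        = #T * (#T + 1) / (2 * Fintype.card ι) * C + ↑(#T + 1) / Fintype.card ι * C := by
      push_cast
      field_simp
      ring
    linarith

lemma successive_decoding_bound
    (hm : ∀ n, uniformEntropy (m n) ≤ L) (hjoint : Fintype.card ι * L ≤ uniformEntropy (univ.inf m))
    (hc : ∀ k, uniformEntropy (c k) ≤ C) (hdec : ∀ d k, x d ⊓ c k ≤ m (d k)) (T : Finset κ) :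
    (1 - (1 - 1 / (Fintype.card ι : ℝ)) ^ #T) * (Fintype.card ι * L)
        - #T * (#T + 1) / (2 * Fintype.card ι) * C
      ≤ 𝔼 d, uniformEntropy (x d) := by
  classical
  exact (le_add_of_nonneg_left (expect_nonneg fun d _ ↦ uniformCondEntropy_nonneg _ _)).trans
    (expect_uniformCondEntropy_image_add_le hm hjoint hc hdec T)

end Converse

section CodedCaching

variable {ι A : Type*} [Fintype ι] [Fintype A]

lemma uniformEntropy_inf_ker_eval [DecidableEq ι] :
    uniformEntropy (univ.inf fun (i : ι) ↦ Setoid.ker fun w : ι → A ↦ w i)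
      = Fintype.card ι * logb 2 (Fintype.card A) := by
  have hbot : (univ.inf fun (i : ι) ↦ Setoid.ker fun w : ι → A ↦ w i) = ⊥ :=
    le_bot_iff.1 fun w w' hw ↦ funext fun i ↦
      (Finset.inf_le (mem_univ i) :
        (univ.inf fun i ↦ Setoid.ker fun w : ι → A ↦ w i) ≤ Setoid.ker fun w : ι → A ↦ w i) hw
  rw [hbot, uniformEntropy_bot, Fintype.card_fun, Nat.cast_pow, logb_pow]

lemma logb_natCast_le_of_le_floor_rpow {n : ℕ} (hn : 0 < n) {y : ℝ} (h : n ≤ ⌊(2 : ℝ) ^ y⌋₊) :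
    logb 2 n ≤ y := by
  rw [logb_le_iff_le_rpow one_lt_two (mod_cast hn)]
  exact (Nat.le_floor_iff (by positivity)).1 h

theorem average_case_converse_general [Nonempty ι] [Nonempty A] {κ : Type*} [Fintype κ]
    [DecidableEq κ] {V : κ → Type*} [∀ k, Fintype (V k)] {M : ℝ}
    (hV : ∀ k, logb 2 (Fintype.card (V k)) ≤ logb 2 (Fintype.card A) * M)
    {𝒳 : (κ → ι) → Type*} [∀ d, Fintype (𝒳 d)] (g : ∀ k, (ι → A) → V k) (f : ∀ d, (ι → A) → 𝒳 d)
    (φ : ∀ k d, 𝒳 d → V k → A) (hdec : ∀ w k d, φ k d (f d w) (g k w) = w (d k)) (T : Finset κ) :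
    logb 2 (Fintype.card A) * ((1 - (1 - 1 / (Fintype.card ι : ℝ)) ^ #T)
          * (Fintype.card ι - #T * M))
      ≤ 𝔼 d, logb 2 (Fintype.card (𝒳 d))
    ∧ logb 2 (Fintype.card A) * ((1 - (1 - 1 / (Fintype.card ι : ℝ)) ^ #T) * Fintype.card ι
          - (#T * (#T + 1) / (2 * Fintype.card ι)) * M)
      ≤ 𝔼 d, logb 2 (Fintype.card (𝒳 d)) := by
  classical
  have hmsg (i : ι) : uniformEntropy (Setoid.ker fun w : ι → A ↦ w i) ≤ logb 2 (Fintype.card A) :=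
    uniformEntropy_ker_le _
  have hcache (k : κ) : uniformEntropy (Setoid.ker (g k)) ≤ logb 2 (Fintype.card A) * M :=
    (uniformEntropy_ker_le _).trans (hV k)
  have hdecode (d : κ → ι) (k : κ) :
      Setoid.ker (f d) ⊓ Setoid.ker (g k) ≤ Setoid.ker fun w : ι → A ↦ w (d k) := by
    rintro w w' ⟨hf : f d w = f d w', hg : g k w = g k w'⟩
    rw [Setoid.ker_def, ← hdec w, ← hdec w', hf, hg]
  have hdelivery : 𝔼 d, uniformEntropy (Setoid.ker (f d)) ≤ 𝔼 d, logb 2 (Fintype.card (𝒳 d)) :=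
    expect_le_expect fun d _ ↦ uniformEntropy_ker_le _
  have hjoint := (uniformEntropy_inf_ker_eval (ι := ι) (A := A)).ge
  constructor
  · linarith [joint_decoding_bound hjoint hcache hdecode T]
  · linarith [successive_decoding_bound hmsg hjoint hcache hdecode T]

end CodedCaching

end

/-- **Finite-blocklength average-case converse (Theorem 3).**
For any zero-error coded caching scheme with demand-dependent delivery alphabets `𝒳_d`,
for every `ℓ ∈ {1,…,K}`:
`(1/N^K)·∑_d log₂|𝒳_d| ≥ F·(1 − (1 − 1/N)^ℓ)·(N − ℓM)` and
`(1/N^K)·∑_d log₂|𝒳_d| ≥ F·[(1 − (1 − 1/N)^ℓ)·N − (ℓ(ℓ+1)/(2N))·M]`. -/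
theorem average_case_converse
    (N K F : ℕ) (hN : 0 < N) (hK : 0 < K) (hF : 0 < F)
    (M : ℝ) (hM : 0 ≤ M)
    (V : Fin K → Type) [∀ k, Fintype (V k)]
    (hV : ∀ k, Fintype.card (V k) ≤ ⌊(2 : ℝ) ^ ((F : ℝ) * M)⌋₊)
    (𝒳 : (Fin K → Fin N) → Type) [∀ d, Fintype (𝒳 d)]
    (g : ∀ k : Fin K, (Fin N → Fin (2 ^ F)) → V k)
    (f : ∀ d : Fin K → Fin N, (Fin N → Fin (2 ^ F)) → 𝒳 d)
    (φ : ∀ (k : Fin K) (d : Fin K → Fin N), 𝒳 d → V k → Fin (2 ^ F))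
    (hdec : ∀ (w : Fin N → Fin (2 ^ F)) (k : Fin K) (d : Fin K → Fin N),
      φ k d (f d w) (g k w) = w (d k))
    (ℓ : ℕ) (hℓ1 : 1 ≤ ℓ) (hℓ2 : ℓ ≤ K) :
    (F : ℝ) * ((1 - (1 - 1 / (N : ℝ)) ^ ℓ) * ((N : ℝ) - (ℓ : ℝ) * M))
      ≤ (1 / (N : ℝ) ^ K) * ∑ d : Fin K → Fin N, Real.logb 2 (Fintype.card (𝒳 d))
    ∧ (F : ℝ) * ((1 - (1 - 1 / (N : ℝ)) ^ ℓ) * (N : ℝ)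
          - ((ℓ : ℝ) * ((ℓ : ℝ) + 1) / (2 * (N : ℝ))) * M)
      ≤ (1 / (N : ℝ) ^ K) * ∑ d : Fin K → Fin N, Real.logb 2 (Fintype.card (𝒳 d)) := by
  have : Nonempty (Fin N) := ⟨⟨0, hN⟩⟩
  have hcache (k : Fin K) :
      Real.logb 2 (Fintype.card (V k)) ≤ Real.logb 2 (Fintype.card (Fin (2 ^ F))) * M := by
    have : Nonempty (V k) := ⟨g k fun _ ↦ 0⟩
    simpa [Real.logb_pow] using logb_natCast_le_of_le_floor_rpow Fintype.card_pos (hV k)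
  obtain ⟨T, -, rfl⟩ := Finset.exists_subset_card_eq (s := (Finset.univ : Finset (Fin K))) (n := ℓ)
    (by simpa using hℓ2)
  simpa [Real.logb_pow, Fintype.expect_eq_sum_div_card, div_eq_inv_mul] using
    average_case_converse_general hcache g f φ hdec T
end

section
/- Theorem 2 (worst-case gap bound): Let K and N be positive integers, set N̄ := min(K,N), and let M ∈ [0, N). Define R_YMA(K,N,M) := N̄ if M = 0 and R_YMA(K,N,M) := ((N−M)/M)·(1 − (1 − M/N)^N̄) if M ∈ (0,N); define R^low_worst(K,N,M) := max over ℓ ∈ {1,…,N̄} of max{ ℓ − M·ℓ²/N , ℓ − M·∑_{k=1}^{ℓ} k/(N−k+1) }. Then for every real number C such that φ(a,ℓ) ≤ C for all ℓ ∈ ℤ⁺ and all a ∈ (0,1), it holds that R_YMA(K,N,M) ≤ C·R^low_worst(K,N,M). (Since the worst-case rate-memory tradeoff R*_worst(M) satisfies R^low_worst(K,N,M) ≤ R*_worst(M) ≤ R_YMA(K,N,M), this gives R*_worst(M)/R^low_worst(K,N,M) ≤ sup_{ℓ∈ℤ⁺} sup_{a∈(0,1)} φ(a,ℓ).) -/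
/-- The function `φ(a,ℓ)` from Theorem 2 of the paper. -/
noncomputable def phi (a : ℝ) (ℓ : ℕ) : ℝ :=
  ((a * ((ℓ : ℝ) + 1) / ((1 - a) * (ℓ : ℝ))) *
      (1 - (((ℓ : ℝ) + a) / ((ℓ : ℝ) + 1)) ^ ((ℓ : ℝ) / a))) /
    (1 - (1 - a) * ∑ j ∈ Finset.range ℓ, 1 / ((ℓ : ℝ) - a * (j : ℝ)))

/-- The Yu–Maddah-Ali–Avestimehr achievable (worst-case) rate for decentralized
coded caching with `K` users, `N` files and cache size `M`. -/
noncomputable def RYMA (K N : ℕ) (M : ℝ) : ℝ :=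
  if M = 0 then (min K N : ℝ)
  else ((N : ℝ) - M) / M * (1 - (1 - M / (N : ℝ)) ^ min K N)

/-!
As a function of `M`, the rate is `∑ i ∈ {1, …, min K N}, (1 - M / N) ^ i`, hence convex, while the
second lower bound for a fixed `ℓ` is affine. The lower bounds for `ℓ` and `ℓ + 1` cross at
`M = (N - ℓ) / (ℓ + 1)`, so between consecutive crossing points convexity reduces the inequality to
the two endpoints. At the crossing point of index `ℓ` the rate with at least `N` users is exactly
`φ(ℓ / N, ℓ)` times the lower bound, and having fewer users only decreases the rate. To the
left of the last crossing point the other endpoint is `M = 0`, where rate and lower bound agree and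
`1 ≤ φ(1/2, 1) ≤ C` suffices.
-/

/-- The second term `ℓ - M * ∑_{k=1}^ℓ k / (N - k + 1)` of the lower bound `R^low_worst(K,N,M)`. -/
noncomputable def linearLowerBound (N ℓ : ℕ) (M : ℝ) : ℝ :=
  (ℓ : ℝ) - M * ∑ k ∈ Finset.Icc 1 ℓ, (k : ℝ) / ((N : ℝ) - (k : ℝ) + 1)

/-- The memory size at which the linear lower bounds for `ℓ` and `ℓ + 1` cross. -/
noncomputable def breakpoint (N ℓ : ℕ) : ℝ := ((N : ℝ) - ℓ) / ((ℓ : ℝ) + 1)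

theorem exists_lt_and_le_and_succ_le {α : Type*} [LinearOrder α] {b : ℕ → α} {x : α}
    (hx : x ≤ b 0) {n : ℕ} (hn : 0 < n) :
    ∃ ℓ < n, x ≤ b ℓ ∧ (ℓ + 1 = n ∨ b (ℓ + 1) ≤ x) := by
  induction n, hn using Nat.le_induction with
  | base => exact ⟨0, one_pos, hx, .inl rfl⟩
  | succ n hn ih =>
    obtain ⟨ℓ, hℓ, hxℓ, rfl | hℓx⟩ := ih
    · rcases le_total x (b (ℓ + 1)) with h | h
      · exact ⟨ℓ + 1, by omega, h, .inl rfl⟩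
      · exact ⟨ℓ, by omega, hxℓ, .inr h⟩
    · exact ⟨ℓ, by omega, hxℓ, .inr hℓx⟩

theorem le_of_convexOn_of_concaveOn_of_mem_Icc {𝕜 β : Type*}
    [Field 𝕜] [LinearOrder 𝕜] [IsStrictOrderedRing 𝕜]
    [AddCommGroup β] [LinearOrder β] [IsOrderedAddMonoid β] [Module 𝕜 β]
    [IsStrictOrderedModule 𝕜 β] {s : Set 𝕜} {f g : 𝕜 → β} {a b x : 𝕜}
    (hf : ConvexOn 𝕜 s f) (hg : ConcaveOn 𝕜 s g) (has : a ∈ s) (hbs : b ∈ s)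
    (ha : f a ≤ g a) (hb : f b ≤ g b) (hx : x ∈ Set.Icc a b) : f x ≤ g x := by
  have hmax : f x - g x ≤ max (f a - g a) (f b - g b) :=
    (hf.sub hg).le_max_of_mem_Icc has hbs hx
  exact sub_nonpos.mp (hmax.trans (max_le (sub_nonpos.mpr ha) (sub_nonpos.mpr hb)))

theorem sum_Icc_div_sub_add_one {F : Type*} [Field F] (x : F) (n : ℕ)
    (hx : ∀ j < n, x ≠ (j : F)) :
    ∑ k ∈ Finset.Icc 1 n, (k : F) / (x - k + 1) =
      (x + 1) * ∑ j ∈ Finset.range n, 1 / (x - j) - n := by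
  induction n with
  | zero => simp
  | succ n ih =>
    have hxn : x - n ≠ 0 := sub_ne_zero.mpr (hx n n.lt_succ_self)
    rw [Finset.sum_Icc_succ_top (by omega), Finset.sum_range_succ,
      ih fun j hj => hx j (hj.trans n.lt_succ_self)]
    push_cast
    rw [show x - (n + 1) + 1 = x - n by ring]
    field_simp
    ring

theorem RYMA_zero (K N : ℕ) : RYMA K N 0 = min K N := by
  simp [RYMA]

theorem RYMA_eq_sum (K : ℕ) {N : ℕ} (hN : N ≠ 0) (M : ℝ) :
    RYMA K N M = ∑ i ∈ Finset.range (min K N), (1 - M / N) ^ (i + 1) := by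
  rcases eq_or_ne M 0 with rfl | hM
  · simp [RYMA_zero]
  · have hgeom := geom_sum_mul_neg (1 - M / (N : ℝ)) (min K N)
    simp only [RYMA, if_neg hM, pow_succ, ← Finset.sum_mul]
    rw [← hgeom]
    field_simp
    ring

theorem RYMA_le_RYMA_self (K : ℕ) {N : ℕ} (hN : N ≠ 0) {M : ℝ} (hM : M ≤ N) :
    RYMA K N M ≤ RYMA N N M := by
  have hbase : 0 ≤ 1 - M / (N : ℝ) := sub_nonneg.mpr (div_le_one_of_le₀ hM N.cast_nonneg)
  rw [RYMA_eq_sum K hN, RYMA_eq_sum N hN, min_self]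
  exact Finset.sum_le_sum_of_subset_of_nonneg (Finset.range_mono (min_le_right K N))
    fun _ _ _ => pow_nonneg hbase _

theorem convexOn_one_sub_div_pow {c : ℝ} (hc : 0 ≤ c) (i : ℕ) :
    ConvexOn ℝ (Set.Iic c) fun x => (1 - x / c) ^ i := by
  have haffine : ConvexOn ℝ (Set.Iic c) fun x => 1 - x / c := by
    simp only [div_eq_mul_inv]
    exact (convexOn_const 1 (convex_Iic c)).sub
      ((LinearMap.mulRight ℝ c⁻¹).concaveOn (convex_Iic c))
  exact haffine.pow (fun x hx => sub_nonneg.mpr (div_le_one_of_le₀ hx hc)) i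

theorem convexOn_RYMA (K : ℕ) {N : ℕ} (hN : N ≠ 0) :
    ConvexOn ℝ (Set.Iic (N : ℝ)) (RYMA K N) := by
  rw [funext (RYMA_eq_sum K hN)]
  induction min K N with
  | zero => simpa using convexOn_const (0 : ℝ) (convex_Iic (N : ℝ))
  | succ n ih =>
    simp only [Finset.sum_range_succ]
    exact ih.add (convexOn_one_sub_div_pow N.cast_nonneg (n + 1))

theorem concaveOn_linearLowerBound (N ℓ : ℕ) {s : Set ℝ} (hs : Convex ℝ s) :
    ConcaveOn ℝ s (linearLowerBound N ℓ) :=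
  (concaveOn_const (ℓ : ℝ) hs).sub ((LinearMap.mulRight ℝ
    (∑ k ∈ Finset.Icc 1 ℓ, (k : ℝ) / ((N : ℝ) - (k : ℝ) + 1))).convexOn hs)

theorem breakpoint_le (N ℓ : ℕ) : breakpoint N ℓ ≤ N := by
  rw [breakpoint, div_le_iff₀ (by positivity)]
  nlinarith [mul_nonneg N.cast_nonneg (Nat.cast_nonneg (α := ℝ) ℓ), Nat.cast_nonneg (α := ℝ) ℓ]

theorem linearLowerBound_succ_breakpoint {N ℓ : ℕ} (h : ℓ < N) :
    linearLowerBound N (ℓ + 1) (breakpoint N ℓ) = linearLowerBound N ℓ (breakpoint N ℓ) := by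
  have hd : (N : ℝ) - ℓ ≠ 0 := sub_ne_zero.mpr (Nat.cast_lt.mpr h).ne'
  have hterm : breakpoint N ℓ * (((ℓ : ℝ) + 1) / (N - ℓ)) = 1 := by
    rw [breakpoint]
    field_simp
  rw [linearLowerBound, linearLowerBound, Finset.sum_Icc_succ_top (by omega), mul_add]
  push_cast
  rw [show (N : ℝ) - (ℓ + 1) + 1 = N - ℓ by ring, hterm]
  ring

theorem natCast_div_mem_Ioo {F : Type*} [Field F] [LinearOrder F] [IsStrictOrderedRing F]
    {m n : ℕ} (hm : 0 < m) (hmn : m < n) : (m : F) / n ∈ Set.Ioo (0 : F) 1 := by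
  have hn : (0 : F) < n := Nat.cast_pos.mpr (hm.trans hmn)
  exact ⟨by positivity, (div_lt_one hn).mpr (Nat.cast_lt.mpr hmn)⟩

theorem phi_denom_pos {a : ℝ} (ha : a ∈ Set.Ioo (0 : ℝ) 1) {ℓ : ℕ} (hℓ : 0 < ℓ) :
    0 < 1 - (1 - a) * ∑ j ∈ Finset.range ℓ, 1 / ((ℓ : ℝ) - a * j) := by
  have hℓ' : (0 : ℝ) < ℓ := Nat.cast_pos.mpr hℓ
  have hterm (j : ℕ) (hj : j ∈ Finset.range ℓ) :
      (1 - a) * (1 / ((ℓ : ℝ) - a * j)) < 1 / ℓ := by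
    have hjℓ : (j : ℝ) < ℓ := Nat.cast_lt.mpr (Finset.mem_range.mp hj)
    have hlt : (1 - a) * ℓ < ℓ - a * j := by
      linarith [mul_lt_mul_of_pos_left hjℓ ha.1]
    have hpos : 0 < ℓ - a * j := (mul_pos (sub_pos.mpr ha.2) hℓ').trans hlt
    rwa [mul_one_div, div_lt_div_iff₀ hpos hℓ', one_mul]
  rw [sub_pos, Finset.mul_sum]
  calc ∑ j ∈ Finset.range ℓ, (1 - a) * (1 / ((ℓ : ℝ) - a * j))
      < ∑ _j ∈ Finset.range ℓ, 1 / (ℓ : ℝ) :=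
        Finset.sum_lt_sum_of_nonempty (Finset.nonempty_range_iff.mpr hℓ.ne') hterm
    _ = 1 := by simp [hℓ'.ne']

theorem linearLowerBound_breakpoint {N ℓ : ℕ} (hℓ : 0 < ℓ) (hℓN : ℓ ≤ N) :
    linearLowerBound N ℓ (breakpoint N ℓ) = (N - breakpoint N ℓ) *
      (1 - (1 - (ℓ : ℝ) / N) * ∑ j ∈ Finset.range ℓ, 1 / ((ℓ : ℝ) - ℓ / N * j)) := by
  have hN : (N : ℝ) ≠ 0 := Nat.cast_ne_zero.mpr (by omega)
  have hℓ' : (ℓ : ℝ) ≠ 0 := Nat.cast_ne_zero.mpr hℓ.ne'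
  have hsum : ∑ j ∈ Finset.range ℓ, 1 / ((ℓ : ℝ) - ℓ / N * j) =
      N / ℓ * ∑ j ∈ Finset.range ℓ, 1 / ((N : ℝ) - j) := by
    rw [Finset.mul_sum]
    refine Finset.sum_congr rfl fun j _ => ?_
    rw [show (ℓ : ℝ) - ℓ / N * j = ℓ / N * (N - j) by field_simp, one_div, mul_inv, inv_div,
      one_div]
  rw [linearLowerBound, hsum, sum_Icc_div_sub_add_one (N : ℝ) ℓ fun j hj =>
    (Nat.cast_lt.mpr (hj.trans_le hℓN)).ne', breakpoint]
  field_simp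
  ring

theorem phi_mul_linearLowerBound_breakpoint {N ℓ : ℕ} (hℓ : 0 < ℓ) (hℓN : ℓ < N) :
    phi (ℓ / N) ℓ * linearLowerBound N ℓ (breakpoint N ℓ) = RYMA N N (breakpoint N ℓ) := by
  have hℓ' : (0 : ℝ) < ℓ := Nat.cast_pos.mpr hℓ
  have hN : (0 : ℝ) < N := Nat.cast_pos.mpr (hℓ.trans hℓN)
  have hd : (0 : ℝ) < N - ℓ := sub_pos.mpr (Nat.cast_lt.mpr hℓN)
  have hM : breakpoint N ℓ ≠ 0 := (div_pos hd (by positivity)).ne'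
  have hdenom := (phi_denom_pos (natCast_div_mem_Ioo hℓ hℓN) hℓ).ne'
  have hfactor : (ℓ : ℝ) / N * (ℓ + 1) / ((1 - ℓ / N) * ℓ) = 1 / breakpoint N ℓ := by
    rw [one_sub_div hN.ne', breakpoint]
    field_simp
  have hbase : ((ℓ : ℝ) + ℓ / N) / (ℓ + 1) = 1 - breakpoint N ℓ / N := by
    rw [breakpoint]
    field_simp
    ring
  have hexponent : (ℓ : ℝ) / (ℓ / N) = N := div_div_cancel₀ hℓ'.ne'
  rw [linearLowerBound_breakpoint hℓ hℓN.le, phi, hfactor, hbase, hexponent, Real.rpow_natCast,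
    RYMA, if_neg hM, min_self, mul_left_comm, div_mul_cancel₀ _ hdenom]
  ring

theorem linearLowerBound_breakpoint_nonneg {N ℓ : ℕ} (hℓ : 0 < ℓ) (hℓN : ℓ < N) :
    0 ≤ linearLowerBound N ℓ (breakpoint N ℓ) := by
  rw [linearLowerBound_breakpoint hℓ hℓN.le]
  exact mul_nonneg (sub_nonneg.mpr (breakpoint_le N ℓ))
    (phi_denom_pos (natCast_div_mem_Ioo hℓ hℓN) hℓ).le

theorem RYMA_breakpoint_le (K : ℕ) {N ℓ : ℕ} (hℓN : ℓ < N) {C : ℝ}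
    (hC : 0 < ℓ → phi (ℓ / N) ℓ ≤ C) :
    RYMA K N (breakpoint N ℓ) ≤ C * linearLowerBound N ℓ (breakpoint N ℓ) := by
  rcases ℓ.eq_zero_or_pos with rfl | hℓ
  · simp [RYMA, breakpoint, linearLowerBound, hℓN.ne']
  · calc RYMA K N (breakpoint N ℓ)
        ≤ RYMA N N (breakpoint N ℓ) := RYMA_le_RYMA_self K (by omega) (breakpoint_le N ℓ)
      _ = phi (ℓ / N) ℓ * linearLowerBound N ℓ (breakpoint N ℓ) :=
        (phi_mul_linearLowerBound_breakpoint hℓ hℓN).symm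
      _ ≤ C * linearLowerBound N ℓ (breakpoint N ℓ) :=
        mul_le_mul_of_nonneg_right (hC hℓ) (linearLowerBound_breakpoint_nonneg hℓ hℓN)

theorem phi_one_half_one : phi (1 / 2) 1 = 7 / 4 := by
  have hexponent : (1 : ℝ) / (1 / 2) = (2 : ℕ) := by norm_num
  simp only [phi, Nat.cast_one, hexponent, Real.rpow_natCast]
  norm_num

theorem worst_case_gap_general (K N : ℕ) (hK : 0 < K) (hN : 0 < N)
    (M : ℝ) (hM0 : 0 ≤ M) (hMN : M ≤ N) (C : ℝ) (hC1 : 1 ≤ C)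
    (hC : ∀ ℓ : ℕ, 0 < ℓ → ℓ < min K N → phi (ℓ / N) ℓ ≤ C) :
    ∃ ℓ ∈ Finset.Icc 1 (min K N), RYMA K N M ≤ C * linearLowerBound N ℓ M := by
  obtain ⟨ℓ, hℓ, hMℓ, hℓM⟩ := exists_lt_and_le_and_succ_le (b := breakpoint N)
    (by simpa [breakpoint] using hMN) (lt_min hK hN)
  have hℓN : ℓ < N := hℓ.trans_le (min_le_right K N)
  have hright : RYMA K N (breakpoint N ℓ) ≤ C * linearLowerBound N (ℓ + 1) (breakpoint N ℓ) := by
    rw [linearLowerBound_succ_breakpoint hℓN]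
    exact RYMA_breakpoint_le K hℓN fun hpos => hC ℓ hpos hℓ
  have hsegment {A : ℝ} (hAM : A ≤ M)
      (hleft : RYMA K N A ≤ C * linearLowerBound N (ℓ + 1) A) :
      RYMA K N M ≤ C * linearLowerBound N (ℓ + 1) M :=
    le_of_convexOn_of_concaveOn_of_mem_Icc (convexOn_RYMA K hN.ne')
      ((concaveOn_linearLowerBound N (ℓ + 1) (convex_Iic (N : ℝ))).smul (by linarith))
      (hAM.trans hMN) (breakpoint_le N ℓ) hleft hright ⟨hAM, hMℓ⟩
  refine ⟨ℓ + 1, Finset.mem_Icc.mpr ⟨by omega, hℓ⟩, ?_⟩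
  rcases eq_or_lt_of_le (Nat.succ_le_of_lt hℓ) with hlast | hℓ'
  · refine hsegment hM0 ?_
    have hle : (1 : ℝ) * (ℓ + 1) ≤ C * (ℓ + 1) := mul_le_mul_of_nonneg_right hC1 (by positivity)
    simpa [RYMA_zero, linearLowerBound, ← Nat.cast_min, ← hlast] using hle
  · exact hsegment (hℓM.resolve_left hℓ'.ne)
      (RYMA_breakpoint_le K (hℓ'.trans_le (min_le_right K N)) fun hpos => hC _ hpos hℓ')

/-- **Theorem 2 (worst-case gap bound).** For all `K, N ≥ 1` and `M ∈ [0,N)`,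
and any constant `C` dominating `φ(a,ℓ)` for all positive integers `ℓ` and all
`a ∈ (0,1)`, the YMA achievable rate is at most `C` times the lower bound
`R^low_worst(K,N,M) = max_{ℓ ∈ {1,…,min(K,N)}} max{ℓ − Mℓ²/N, ℓ − M∑_{k=1}^{ℓ} k/(N−k+1)}`. -/
theorem worst_case_gap (K N : ℕ) (hK : 0 < K) (hN : 0 < N)
    (M : ℝ) (hM0 : 0 ≤ M) (hMN : M < N)
    (C : ℝ) (hC : ∀ ℓ : ℕ, 0 < ℓ → ∀ a ∈ Set.Ioo (0 : ℝ) 1, phi a ℓ ≤ C) :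
    RYMA K N M ≤
      C * (Finset.Icc 1 (min K N)).sup'
        (Finset.nonempty_Icc.mpr (by omega))
        (fun ℓ => max ((ℓ : ℝ) - M * (ℓ : ℝ) ^ 2 / (N : ℝ))
          ((ℓ : ℝ) - M * ∑ k ∈ Finset.Icc 1 ℓ, (k : ℝ) / ((N : ℝ) - (k : ℝ) + 1))) := by
  have hC1 : 1 ≤ C :=
    (by norm_num [phi_one_half_one] : 1 ≤ phi (1 / 2) 1).trans (hC 1 one_pos _ (by norm_num))
  obtain ⟨ℓ, hℓ, hle⟩ := worst_case_gap_general K N hK hN M hM0 hMN.le C hC1 fun ℓ hℓ hℓn =>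
    hC ℓ hℓ _ (natCast_div_mem_Ioo hℓ (lt_min_iff.mp hℓn).2)
  exact hle.trans (mul_le_mul_of_nonneg_left
    (Finset.le_sup'_of_le _ hℓ (le_max_right _ _)) (by linarith))
end
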